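/- arXiv:math/0109029 — 2 statements merged into one kernel-verified Lean document; each statement's English description precedes it below -/
import Mathlib

section
/- Let p be a prime and n ≥ 1. Let φ be the bilinear form on the vector space (ZMod p)^{2n−1} with basis f_1, …, f_{2n−1} determined by φ(f_i, f_j) = 1 if j = i+1, φ(f_i, f_j) = −1 if j = i−1, and φ(f_i, f_j) = 0 if |i − j| ≠ 1. Then φ is alternating (φ(v, v) = 0 for all v), and its radical { v : φ(v, w) = 0 for all w } is exactly the one-dimensional subspace spanned by f_1 + f_3 + ⋯ + f_{2n−1}; in particular φ has nullity 1. -/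
/-!
Write the Gram matrix of `φ` as `U - Uᵀ`, where `U i j = 1` exactly when `j = i + 1`. Then
`φ v v = v U vᵀ - v Uᵀ vᵀ = 0`, which proves that `φ` is alternating in every characteristic,
including `2`.

Extending `v` by zero outside its index range, `φ(v, f_j) = v_{j-1} - v_{j+1}`
(`tangle_apply_single`). Hence `v` lies in the radical iff `v_1 = 0` (0-indexed) and
`v_{k+2} = v_k` throughout, so the odd-indexed entries vanish and the even-indexed ones all
equal `v_0`. Since the dimension `2n - 1` is odd, the last index is even, so the condition at
the right end of the range holds automatically and `v_0` is unconstrained.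
-/

/-- Extension of a finite vector by zero to all natural indices. -/
def tangleExt {R : Type*} [Zero R] {m : ℕ} (v : Fin m → R) (k : ℕ) : R :=
  if h : k < m then v ⟨k, h⟩ else 0

lemma sum_mul_ite_val_eq {R : Type*} [CommRing R] {m : ℕ} (v : Fin m → R) (k : ℕ) :
    ∑ i, v i * (if (i : ℕ) = k then 1 else 0) = tangleExt v k := by
  unfold tangleExt
  split_ifs with h
  · rw [Finset.sum_eq_single ⟨k, h⟩]
    · simp
    · intro i _ hi
      rw [if_neg (fun h' => hi (Fin.ext h')), mul_zero]
    · simp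
  · refine Finset.sum_eq_zero fun i _ => ?_
    rw [if_neg (by have := i.2; omega), mul_zero]

lemma tangle_gram_eq_sub {R : Type*} [CommRing R] (i j : ℕ) :
    (if j = i + 1 then (1 : R) else if i = j + 1 then -1 else 0) =
      (if j = i + 1 then 1 else 0) - (if i = j + 1 then 1 else 0) := by
  split_ifs <;> first | omega | simp

lemma bilin_eq_sum_single {R : Type*} [CommRing R] {m : ℕ}
    (φ : (Fin m → R) →ₗ[R] (Fin m → R) →ₗ[R] R) (v w : Fin m → R) :
    φ v w = ∑ i, v i * φ (Pi.single i 1) w := by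
  conv_lhs => rw [pi_eq_sum_univ' v]
  simp [map_sum, LinearMap.sum_apply]

lemma linear_eq_sum_single {R : Type*} [CommRing R] {m : ℕ}
    (f : (Fin m → R) →ₗ[R] R) (w : Fin m → R) :
    f w = ∑ j, w j * f (Pi.single j 1) := by
  conv_lhs => rw [pi_eq_sum_univ' w]
  simp [map_sum]

lemma tangle_apply_single {R : Type*} [CommRing R] {m : ℕ}
    (φ : (Fin m → R) →ₗ[R] (Fin m → R) →ₗ[R] R)
    (hφ : ∀ i j : Fin m, φ (Pi.single i 1) (Pi.single j 1) =
      if (j : ℕ) = (i : ℕ) + 1 then 1 else if (i : ℕ) = (j : ℕ) + 1 then -1 else 0)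
    (v : Fin m → R) (j : Fin m) :
    φ v (Pi.single j 1) =
      (if (j : ℕ) = 0 then 0 else tangleExt v (j - 1)) - tangleExt v (j + 1) := by
  rw [bilin_eq_sum_single]
  simp_rw [hφ, tangle_gram_eq_sub, mul_sub]
  rw [Finset.sum_sub_distrib, sum_mul_ite_val_eq]
  congr 1
  split_ifs with h
  · exact Finset.sum_eq_zero fun i _ => by rw [if_neg (by omega), mul_zero]
  · rw [← sum_mul_ite_val_eq]
    refine Finset.sum_congr rfl fun i _ => ?_
    congr 1
    exact if_congr (by omega) rfl rfl

lemma tangle_alternating {R : Type*} [CommRing R] {m : ℕ}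
    (φ : (Fin m → R) →ₗ[R] (Fin m → R) →ₗ[R] R)
    (hφ : ∀ i j : Fin m, φ (Pi.single i 1) (Pi.single j 1) =
      if (j : ℕ) = (i : ℕ) + 1 then 1 else if (i : ℕ) = (j : ℕ) + 1 then -1 else 0)
    (v : Fin m → R) : φ v v = 0 := by
  rw [bilin_eq_sum_single]
  simp_rw [linear_eq_sum_single (φ (Pi.single _ 1)) v, hφ, tangle_gram_eq_sub, mul_sub,
    Finset.sum_sub_distrib, mul_sub, Finset.sum_sub_distrib, Finset.mul_sum]
  rw [sub_eq_zero]
  conv_rhs => rw [Finset.sum_comm]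
  exact Finset.sum_congr rfl fun i _ => Finset.sum_congr rfl fun j _ => by ring

/-- The recursion `v_1 = 0`, `v_{k+2} = v_k` determines a radical vector from `v_0`. -/
lemma tangleExt_of_radical {R : Type*} [CommRing R] {m : ℕ} (v : Fin m → R)
    (h : ∀ j : Fin m,
      (if (j : ℕ) = 0 then 0 else tangleExt v (j - 1)) - tangleExt v (j + 1) = 0)
    (k : ℕ) (hk : k < m) :
    tangleExt v k = if k % 2 = 0 then tangleExt v 0 else 0 := by
  induction k using Nat.strong_induction_on with
  | _ k ih =>
    match k, hk, ih with
    | 0, _, _ => simp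
    | 1, hk, _ =>
      have := h ⟨0, by omega⟩
      simpa using this
    | k + 2, hk, ih =>
      have h1 := h ⟨k + 1, by omega⟩
      simp only [Nat.add_eq_zero_iff, one_ne_zero, and_false, if_false,
        Nat.add_sub_cancel] at h1
      rw [← sub_eq_zero.mp h1, ih k (by omega) (by omega), Nat.add_mod_right]

/-- For `p` prime and `n ≥ 1`, the bilinear form `φ` on `(ZMod p)^{2n−1}`
with `φ(f_i,f_j) = 1` if `j = i+1`, `−1` if `j = i−1`, and `0` if `|i−j| ≠ 1`
(here `f_i = Pi.single i 1` is the standard basis, 0-indexed) is alternating, and its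
radical is exactly the one-dimensional subspace spanned by `f_1 + f_3 + ⋯ + f_{2n−1}`
(the vector with `1` in each odd position in 1-indexing, i.e. even position 0-indexed);
in particular `φ` has nullity 1. -/
theorem tangle_bilinear_form_radical
    (p n : ℕ) (hp : p.Prime) (hn : 1 ≤ n)
    (φ : (Fin (2 * n - 1) → ZMod p) →ₗ[ZMod p]
         (Fin (2 * n - 1) → ZMod p) →ₗ[ZMod p] ZMod p)
    (hφ : ∀ i j : Fin (2 * n - 1),
      φ (Pi.single i 1) (Pi.single j 1) =
        if (j : ℕ) = (i : ℕ) + 1 then 1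
        else if (i : ℕ) = (j : ℕ) + 1 then -1
        else 0)
    (r : Fin (2 * n - 1) → ZMod p)
    (hr : r = fun (i : Fin (2 * n - 1)) => if (i : ℕ) % 2 = 0 then (1 : ZMod p) else 0) :
    (∀ v, φ v v = 0) ∧
    (∀ v, (∀ w, φ v w = 0) ↔
      v ∈ Submodule.span (ZMod p) ({r} : Set (Fin (2 * n - 1) → ZMod p))) ∧
    Module.finrank (ZMod p)
      (Submodule.span (ZMod p) ({r} : Set (Fin (2 * n - 1) → ZMod p))) = 1 := by
  haveI : Fact p.Prime := ⟨hp⟩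
  have key := tangle_apply_single φ hφ
  have hφr : ∀ w, φ r w = 0 := by
    intro w
    rw [linear_eq_sum_single]
    refine Finset.sum_eq_zero fun j _ => ?_
    have hj := j.2
    rw [key, hr]
    -- For odd `j` both neighbours are in range because the last index `2n - 2` is even.
    unfold tangleExt
    rcases Nat.mod_two_eq_zero_or_one (j : ℕ) with h | h
    · have h1 : ((j : ℕ) + 1) % 2 = 1 := by omega
      by_cases h0 : (j : ℕ) = 0
      · simp [h0]
      · have h2 : ((j : ℕ) - 1) % 2 = 1 := by omega
        simp [h0, h1, h2]
    · have h0 : (j : ℕ) ≠ 0 := by omega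
      have h1 : ((j : ℕ) + 1) % 2 = 0 := by omega
      have h2 : ((j : ℕ) - 1) % 2 = 0 := by omega
      have h3 : (j : ℕ) + 1 < 2 * n - 1 := by omega
      have h4 : (j : ℕ) - 1 < 2 * n - 1 := by omega
      simp [h0, h1, h2, h3, h4]
  refine ⟨tangle_alternating φ hφ, fun v => ⟨fun hv => ?_, fun hv => ?_⟩, ?_⟩
  · rw [Submodule.mem_span_singleton]
    refine ⟨tangleExt v 0, ?_⟩
    have h := tangleExt_of_radical v fun j => by rw [← key, hv]
    funext i
    have hi := h i i.2
    have hvi : tangleExt v i = v i := by simp [tangleExt]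
    rw [← hvi, hi, hr]
    simp
  · obtain ⟨c, rfl⟩ := Submodule.mem_span_singleton.mp hv
    intro w
    simp [hφr w]
  · refine finrank_span_singleton fun h0 => ?_
    have := congrFun h0 ⟨0, by omega⟩
    simp [hr] at this
end

section
/- Let p be a prime and n ≥ 1. Let φ be the bilinear form on V = (ZMod p)^{2n−1} (basis f_1, …, f_{2n−1}) determined by φ(f_i, f_j) = 1 if j = i+1, −1 if j = i−1, and 0 if |i − j| ≠ 1, and let Z be the subspace spanned by the radical vector f_1 + f_3 + ⋯ + f_{2n−1}. Then φ descends to a well-defined bilinear form φ̂ on the quotient space V/Z (i.e., φ̂(v + Z, w + Z) = φ(v, w) is well defined), the quotient V/Z has dimension 2n−2, and φ̂ is alternating and nondegenerate; that is, (V/Z, φ̂) is a symplectic space over ZMod p. -/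
/-!
Extend a vector `v` by zero at both ends, to the sequence `0, v₁, …, v_N, 0` with `N = 2n − 1`
(`padded v`). The definition of the form then reads `φ(v, f_j) = v_{j-1} - v_{j+1}` with no boundary
cases (`form_single`), and both main facts follow.

* `φ(v, v) = ∑ v_j (v_{j-1} - v_{j+1})` telescopes to `v_0 v_1 - v_N v_{N+1} = 0`, so `φ` is
  alternating, in characteristic two as well (`form_self`).
* `v` is in the radical iff `v_{j-1} = v_{j+1}` for `1 ≤ j ≤ N`. Starting from `v_0 = 0`, this forces
  the even-indexed entries to vanish and the odd-indexed ones to agree, so `v = v_1 • r`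
  (`eq_smul_of_padded_shift`); conversely `r` satisfies these relations because `N + 1` is even.

Hence the radical of `φ` is exactly `Z`, a line, which gives the descent, the dimension and the
nondegeneracy of the quotient form.
-/

namespace TangleForm

variable {K : Type*} [CommRing K] {N : ℕ}

/-- The sequence `0, v₁, …, v_N, 0, 0, …`: the entry of `v` at the zero-based index `i : Fin N` is in
position `i + 1`, and every other position is zero. -/
def padded (v : Fin N → K) (k : ℕ) : K :=
  ∑ i : Fin N, if k = (i : ℕ) + 1 then v i else 0

lemma padded_zero (v : Fin N → K) : padded v 0 = 0 := by
  simp [padded]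

lemma padded_of_lt (v : Fin N → K) {k : ℕ} (hk : N < k) : padded v k = 0 := by
  refine Finset.sum_eq_zero fun i _ => if_neg ?_
  have := i.isLt
  omega

lemma padded_succ (v : Fin N → K) (i : Fin N) : padded v ((i : ℕ) + 1) = v i := by
  simp [padded, Fin.val_inj]

lemma form_single (φ : (Fin N → K) →ₗ[K] (Fin N → K) →ₗ[K] K)
    (hφ : ∀ i j : Fin N, φ (Pi.single i 1) (Pi.single j 1) =
      if (j : ℕ) = (i : ℕ) + 1 then 1 else if (i : ℕ) = (j : ℕ) + 1 then -1 else 0)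
    (v : Fin N → K) (j : Fin N) :
    φ v (Pi.single j 1) = padded v j - padded v ((j : ℕ) + 2) := by
  have h := LinearMap.pi_apply_eq_sum_univ (φ.flip (Pi.single j 1)) v
  simp only [LinearMap.flip_apply] at h
  have hs : ∀ i : Fin N, (fun k => if i = k then (1 : K) else 0) = Pi.single i 1 := by
    intro i
    ext k
    simp [Pi.single_apply, eq_comm]
  simp only [hs, hφ] at h
  rw [h, padded, padded, ← Finset.sum_sub_distrib]
  refine Finset.sum_congr rfl fun i _ => ?_
  split_ifs <;> first | omega | simp

lemma form_apply (φ : (Fin N → K) →ₗ[K] (Fin N → K) →ₗ[K] K)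
    (hφ : ∀ i j : Fin N, φ (Pi.single i 1) (Pi.single j 1) =
      if (j : ℕ) = (i : ℕ) + 1 then 1 else if (i : ℕ) = (j : ℕ) + 1 then -1 else 0)
    (v w : Fin N → K) :
    φ v w = ∑ j : Fin N, w j * (padded v j - padded v ((j : ℕ) + 2)) := by
  have h := LinearMap.pi_apply_eq_sum_univ (φ v) w
  have hs : ∀ i : Fin N, (fun k => if i = k then (1 : K) else 0) = Pi.single i 1 := by
    intro i
    ext k
    simp [Pi.single_apply, eq_comm]
  simpa only [hs, form_single φ hφ, smul_eq_mul] using h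

lemma form_self (φ : (Fin N → K) →ₗ[K] (Fin N → K) →ₗ[K] K)
    (hφ : ∀ i j : Fin N, φ (Pi.single i 1) (Pi.single j 1) =
      if (j : ℕ) = (i : ℕ) + 1 then 1 else if (i : ℕ) = (j : ℕ) + 1 then -1 else 0)
    (v : Fin N → K) : φ v v = 0 := by
  rw [form_apply φ hφ]
  simp only [← padded_succ v]
  rw [Fin.sum_univ_eq_sum_range
    (fun k => padded v (k + 1) * (padded v k - padded v (k + 2))) N]
  have h := Finset.sum_range_sub' (fun k => padded v k * padded v (k + 1)) N
  rw [padded_zero, padded_of_lt v (Nat.lt_succ_self N)] at h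
  simp only [zero_mul, mul_zero, sub_zero] at h
  rw [← h]
  refine Finset.sum_congr rfl fun k _ => ?_
  ring

/-- A vector whose padded sequence satisfies `v_{j-1} = v_{j+1}` for `1 ≤ j ≤ N` is a multiple of the
vector `(1, 0, 1, …)`. -/
lemma eq_smul_of_padded_shift (hN : 0 < N) (v : Fin N → K)
    (h : ∀ j : Fin N, padded v j = padded v ((j : ℕ) + 2)) :
    v = v ⟨0, hN⟩ • fun i : Fin N => if (i : ℕ) % 2 = 0 then (1 : K) else 0 := by
  have key : ∀ k, k ≤ N → padded v k = if k % 2 = 1 then v ⟨0, hN⟩ else 0 := by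
    intro k
    induction k using Nat.strong_induction_on with
    | _ k ih =>
      intro hk
      match k, ih, hk with
      | 0, _, _ => simp [padded_zero]
      | 1, _, _ => simpa using padded_succ v ⟨0, hN⟩
      | k + 2, ih, hk =>
        have h1 := h ⟨k, by omega⟩
        simp only at h1
        rw [← h1, ih k (by omega) (by omega)]
        simp
  ext i
  rw [← padded_succ v i, key _ i.isLt]
  by_cases hi : (i : ℕ) % 2 = 0
  · simp [hi, show ((i : ℕ) + 1) % 2 = 1 by omega]
  · simp [hi, show ¬ ((i : ℕ) + 1) % 2 = 1 by omega]

/-- The padded sequence of `(1, 0, 1, …, 0, 1)`, of odd length, is invariant under shifts by two up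
to its right end. -/
lemma padded_alternating (hN : N % 2 = 1) (j : Fin N) :
    padded (fun i : Fin N => if (i : ℕ) % 2 = 0 then (1 : K) else 0) j =
      padded (fun i : Fin N => if (i : ℕ) % 2 = 0 then (1 : K) else 0) ((j : ℕ) + 2) := by
  have key : ∀ k, k ≤ N + 1 →
      padded (fun i : Fin N => if (i : ℕ) % 2 = 0 then (1 : K) else 0) k =
        if k % 2 = 1 then 1 else 0 := by
    intro k hk
    rcases k with _ | k
    · simp [padded_zero]
    · by_cases hkN : k < N
      · refine (padded_succ _ ⟨k, hkN⟩).trans ?_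
        by_cases hk2 : k % 2 = 0
        · simp [hk2, show (k + 1) % 2 = 1 by omega]
        · simp [hk2, show ¬ (k + 1) % 2 = 1 by omega]
      · rw [padded_of_lt _ (by omega), if_neg (by omega)]
  have := j.isLt
  rw [key _ (by omega), key _ (by omega)]
  simp

end TangleForm

open TangleForm in
/-- For `p` prime and `n ≥ 1`, the bilinear form `φ` on
`V = (ZMod p)^{2n−1}` (with `φ(f_i,f_j) = 1` if `j = i+1`, `−1` if `j = i−1`, `0`
otherwise, in the standard basis `f_i = Pi.single i 1`) descends to a well-defined
bilinear form `φ̂` on the quotient `V/Z` by the span `Z` of the radical vector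
`f_1 + f_3 + ⋯ + f_{2n−1}`; the quotient has dimension `2n−2`, and `φ̂` is alternating
and nondegenerate, i.e. `(V/Z, φ̂)` is a symplectic space over `ZMod p`. -/
theorem tangle_bilinear_form_descends_to_symplectic
    (p n : ℕ) (hp : p.Prime) (hn : 1 ≤ n)
    (φ : (Fin (2 * n - 1) → ZMod p) →ₗ[ZMod p]
         (Fin (2 * n - 1) → ZMod p) →ₗ[ZMod p] ZMod p)
    (hφ : ∀ i j : Fin (2 * n - 1),
      φ (Pi.single i 1) (Pi.single j 1) =
        if (j : ℕ) = (i : ℕ) + 1 then 1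
        else if (i : ℕ) = (j : ℕ) + 1 then -1
        else 0)
    (r : Fin (2 * n - 1) → ZMod p)
    (hr : r = fun (i : Fin (2 * n - 1)) => if (i : ℕ) % 2 = 0 then (1 : ZMod p) else 0)
    (Z : Submodule (ZMod p) (Fin (2 * n - 1) → ZMod p))
    (hZ : Z = Submodule.span (ZMod p) ({r} : Set (Fin (2 * n - 1) → ZMod p))) :
    ∃ φhat : ((Fin (2 * n - 1) → ZMod p) ⧸ Z) →ₗ[ZMod p]
             ((Fin (2 * n - 1) → ZMod p) ⧸ Z) →ₗ[ZMod p] ZMod p,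
      (∀ v w, φhat (Submodule.Quotient.mk v) (Submodule.Quotient.mk w) = φ v w) ∧
      Module.finrank (ZMod p) ((Fin (2 * n - 1) → ZMod p) ⧸ Z) = 2 * n - 2 ∧
      (∀ x, φhat x x = 0) ∧
      (∀ x, (∀ y, φhat x y = 0) → x = 0) := by
  have : Fact p.Prime := ⟨hp⟩
  have halt : φ.IsAlt := form_self φ hφ
  have hrφ : φ r = 0 := by
    refine LinearMap.ext fun w => ?_
    rw [form_apply φ hφ]
    refine Finset.sum_eq_zero fun j _ => ?_
    rw [hr, padded_alternating (by omega) j, sub_self, mul_zero]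
  have hker : Z ≤ LinearMap.ker φ := by
    rw [hZ, Submodule.span_singleton_le_iff_mem]
    exact hrφ
  have hker' : Z ≤ LinearMap.ker (Z.liftQ φ hker).flip := by
    intro z hz
    rw [LinearMap.mem_ker]
    refine LinearMap.ext fun x => ?_
    obtain ⟨v, rfl⟩ := Submodule.Quotient.mk_surjective Z x
    have hz0 : φ z = 0 := hker hz
    change φ v z = 0
    rw [← halt.neg, hz0]
    simp
  have hN : 0 < 2 * n - 1 := by omega
  refine ⟨(Z.liftQ (Z.liftQ φ hker).flip hker').flip, fun v w => rfl, ?_, ?_, ?_⟩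
  · have hr0 : r ≠ 0 := by
      intro h
      have h0 := congrFun h ⟨0, hN⟩
      simp [hr] at h0
    have h1 := Submodule.finrank_quotient_add_finrank Z
    have h2 : Module.finrank (ZMod p) Z = 1 := by
      rw [hZ]
      exact finrank_span_singleton hr0
    rw [h2, Module.finrank_fin_fun] at h1
    omega
  · intro x
    obtain ⟨v, rfl⟩ := Submodule.Quotient.mk_surjective Z x
    exact halt v
  · intro x hx
    obtain ⟨v, rfl⟩ := Submodule.Quotient.mk_surjective Z x
    rw [Submodule.Quotient.mk_eq_zero, hZ, Submodule.mem_span_singleton]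
    refine ⟨v ⟨0, hN⟩, ?_⟩
    rw [hr]
    refine (eq_smul_of_padded_shift hN v fun j => ?_).symm
    have hj : φ v (Pi.single j 1) = 0 := hx (Submodule.Quotient.mk (Pi.single j 1))
    rw [form_single φ hφ] at hj
    exact sub_eq_zero.mp hj
end
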